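/- There exists a universal constant c > 0 such that for all integers L ≥ 2 and 1 ≤ k ≤ L, and for every α ∈ [0,1], there exist real coefficients m_1,…,m_k such that ‖Σ_{i=1}^k m_i·φ_i − μ_L(α)‖₂ ≤ c·e^{−k/log L}, where φ_1,…,φ_k are the spectral filters of length L. -/

import Mathlib

/-- The impulse vector `μ_L(α) ∈ ℝ^L`, `μ_L(α)_i = (1−α)·α^(i−1)` (0-indexed here). -/
noncomputable def impulse (L : ℕ) (α : ℝ) : Fin L → ℝ := fun i => (1 - α) * α ^ (i : ℕ)

/-- Euclidean norm of a vector in `ℝ^L`. -/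
noncomputable def vecNorm {L : ℕ} (v : Fin L → ℝ) : ℝ := Real.sqrt (∑ j, (v j) ^ 2)

/-- The Hankel matrix `Z_L` with entries `(Z_L)_{ij} = 2/((i+j)^3 − (i+j))` (1-indexed). -/
noncomputable def hankel (L : ℕ) : Matrix (Fin L) (Fin L) ℝ :=
  fun i j => 2 / ((((i : ℕ) + (j : ℕ) + 2 : ℕ) : ℝ) ^ 3 - (((i : ℕ) + (j : ℕ) + 2 : ℕ) : ℝ))

/-!
The matrix `Z_L` is the Gram-type integral `∫₀¹ μ(t) μ(t)ᵀ dt` of the impulse curve, so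
`⟪x, Z_L x⟫ = ∫₀¹ ⟪x, μ(t)⟫² dt`. Let `x` be the residual of `μ(α)` after projection onto the first
`k` filters. Then `⟪x, Z_L x⟫ ≤ λ_{k+1} ‖x‖²`, while `⟪x, μ(t)⟫²` equals `‖x‖⁴` at `t = α` and is
Lipschitz with constant `O(‖x‖²)` uniformly in `L`, so its integral is at least a multiple of
`‖x‖⁶`. Hence `‖x‖⁴ = O(λ_{k+1})`. By Courant–Fischer, `λ_{k+1} ≤ ε²` as soon as some
`k`-dimensional space comes `ε`-close to every point of the curve.

Such a space is spanned by geometric sequences. In the Hardy space, the distance from the Szegő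
kernel at `β` to the span of the kernels at nodes `b ∈ S` is the norm of the kernel times the
Blaschke product `∏ |β - b| / |1 - bβ|`. Contracting the parameter by `1 + 1/L`, which costs a
factor at most `e` in the norm of the first `L` coefficients, confines `β = tanh (t / 2)` to a
hyperbolic segment of length `log (2L + 1)`. For `k` nodes equally spaced on a slightly longer
segment the Blaschke product is exponentially small in `k / log L`.
-/

open Finset MeasureTheory Module PowerSeries
open scoped InnerProductSpace

section Blaschke

/-- The Szegő kernel `1 / (1 - aX)`, whose coefficients are the geometric sequence of ratio `a`. -/
def szegoKernel {R : Type*} [CommRing R] (a : R) : R⟦X⟧ :=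
  PowerSeries.mk fun n => a ^ n

/-- The Blaschke factor `(X - a) / (1 - aX)`, an isometry of the Hardy space `H²` vanishing
at `a`. -/
noncomputable def blaschkeFactor {R : Type*} [CommRing R] (a : R) : R⟦X⟧ :=
  (X - C a) * szegoKernel a

theorem one_sub_C_mul_X_mul_szegoKernel {R : Type*} [CommRing R] (a : R) :
    (1 - C a * X) * szegoKernel a = 1 := by
  ext n
  cases n with
  | zero => simp [szegoKernel, sub_mul]
  | succ n =>
    simp [szegoKernel, sub_mul, mul_assoc, coeff_succ_X_mul, coeff_one, pow_succ']

theorem smul_blaschkeFactor_mul_szegoKernel {R : Type*} [CommRing R] (a b : R) :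
    (b - a) • (blaschkeFactor a * szegoKernel b) =
      (1 - a * b) • szegoKernel b - (1 - a ^ 2) • szegoKernel a := by
  have ha := one_sub_C_mul_X_mul_szegoKernel a
  have hb := one_sub_C_mul_X_mul_szegoKernel b
  simp only [smul_eq_C_mul, blaschkeFactor, map_sub, map_mul, map_pow, map_one]
  linear_combination (1 - C a * C b) * szegoKernel b * ha - (1 - C a ^ 2) * szegoKernel a * hb

theorem sum_coeff_X_sub_C_mul_sq {R : Type*} [CommRing R] (a : R) (f : R⟦X⟧) (n : ℕ) :
    ∑ i ∈ range (n + 1), coeff i ((X - C a) * f) ^ 2 =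
      ∑ i ∈ range (n + 1), coeff i ((1 - C a * X) * f) ^ 2 - (1 - a ^ 2) * coeff n f ^ 2 := by
  induction n with
  | zero => simp [sub_mul, mul_assoc]; ring
  | succ n ih =>
    rw [sum_range_succ, sum_range_succ _ (n + 1), ih]
    simp only [sub_mul, one_mul, mul_assoc, map_sub, coeff_succ_X_mul, coeff_C_mul]
    ring

theorem sum_coeff_blaschkeFactor_mul_sq_le {a : ℝ} (ha : |a| < 1) (f : ℝ⟦X⟧) (n : ℕ) :
    ∑ i ∈ range n, coeff i (blaschkeFactor a * f) ^ 2 ≤ ∑ i ∈ range n, coeff i f ^ 2 := by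
  cases n with
  | zero => simp
  | succ n =>
    have hf : (1 - C a * X) * (szegoKernel a * f) = f := by
      rw [← mul_assoc, one_sub_C_mul_X_mul_szegoKernel, one_mul]
    have h := sum_coeff_X_sub_C_mul_sq a (szegoKernel a * f) n
    rw [hf, ← mul_assoc, ← blaschkeFactor] at h
    have ha' : 0 ≤ 1 - a ^ 2 := sub_nonneg.2 (sq_lt_one_iff_abs_lt_one a |>.2 ha).le
    rw [h]
    exact sub_le_self _ (by positivity)

theorem sum_coeff_szegoKernel_sq_le {a : ℝ} (ha : |a| < 1) (n : ℕ) :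
    ∑ i ∈ range n, coeff i (szegoKernel a) ^ 2 ≤ (1 - a ^ 2)⁻¹ := by
  simp only [szegoKernel, coeff_mk, pow_right_comm a _ 2]
  exact sum_le_hasSum _ (fun i _ => by positivity)
    (hasSum_geometric_of_lt_one (sq_nonneg a) ((sq_lt_one_iff_abs_lt_one a).2 ha))

theorem one_sub_mul_ne_zero_of_abs_lt_one {a b : ℝ} (ha : |a| < 1) (hb : |b| < 1) :
    1 - a * b ≠ 0 := by
  have : |a * b| < 1 := by
    rw [abs_mul]; exact mul_lt_one_of_nonneg_of_lt_one_left (abs_nonneg a) ha hb.le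
  linarith [le_abs_self (a * b)]

theorem blaschkeFactor_mul_mem_span {S : Set ℝ} {a : ℝ} (ha : a ∉ S) {f : ℝ⟦X⟧}
    (hf : f ∈ Submodule.span ℝ (szegoKernel '' S)) :
    blaschkeFactor a * f ∈ Submodule.span ℝ (szegoKernel '' insert a S) := by
  suffices Submodule.span ℝ (szegoKernel '' S) ≤
      (Submodule.span ℝ (szegoKernel '' insert a S)).comap
        (LinearMap.mulLeft ℝ (blaschkeFactor a)) from this hf
  rw [Submodule.span_le]
  rintro _ ⟨b, hb, rfl⟩
  have hba : b - a ≠ 0 := sub_ne_zero.2 (ne_of_mem_of_not_mem hb ha)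
  have mem {c : ℝ} (hc : c ∈ insert a S) :
      szegoKernel c ∈ Submodule.span ℝ (szegoKernel '' insert a S) :=
    Submodule.subset_span (Set.mem_image_of_mem _ hc)
  change blaschkeFactor a * szegoKernel b ∈ Submodule.span ℝ _
  rw [← Submodule.smul_mem_iff _ hba, smul_blaschkeFactor_mul_szegoKernel]
  exact sub_mem (Submodule.smul_mem _ _ (mem (Set.mem_insert_of_mem a hb)))
    (Submodule.smul_mem _ _ (mem (Set.mem_insert a S)))

theorem exists_mem_span_szegoKernel_sum_coeff_sub_sq_le (S : Finset ℝ) (hS : ∀ b ∈ S, |b| < 1)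
    {β : ℝ} (hβ : |β| < 1) :
    ∃ f ∈ Submodule.span ℝ (szegoKernel '' (S : Set ℝ)), ∀ n,
      ∑ i ∈ range n, coeff i (szegoKernel β - f) ^ 2 ≤
        (∏ b ∈ S, (β - b) / (1 - b * β)) ^ 2 * (1 - β ^ 2)⁻¹ := by
  induction S using Finset.induction_on with
  | empty => exact ⟨0, zero_mem _, fun n => by simpa using sum_coeff_szegoKernel_sq_le hβ n⟩
  | insert a S haS ih =>
    obtain ⟨f, hf, hfβ⟩ := ih fun b hb => hS b (mem_insert_of_mem hb)
    have ha : |a| < 1 := hS a (mem_insert_self a S)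
    have haβ := one_sub_mul_ne_zero_of_abs_lt_one ha hβ
    set φ := (β - a) / (1 - a * β)
    set κ := (1 - a ^ 2) / (1 - a * β)
    have hβa : φ • (blaschkeFactor a * szegoKernel β) = szegoKernel β - κ • szegoKernel a := by
      simp only [φ, κ, div_eq_inv_mul, mul_smul]
      rw [smul_blaschkeFactor_mul_szegoKernel, smul_sub, inv_smul_smul₀ haβ]
    refine ⟨κ • szegoKernel a + φ • (blaschkeFactor a * f), ?_, fun n => ?_⟩
    · rw [coe_insert]
      exact add_mem (Submodule.smul_mem _ _ (Submodule.subset_span ⟨a, Set.mem_insert a _, rfl⟩))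
        (Submodule.smul_mem _ _ (blaschkeFactor_mul_mem_span haS hf))
    · have hres : szegoKernel β - (κ • szegoKernel a + φ • (blaschkeFactor a * f)) =
          φ • (blaschkeFactor a * (szegoKernel β - f)) := by
        rw [mul_sub, smul_sub, hβa]; abel
      calc ∑ i ∈ range n,
            coeff i (szegoKernel β - (κ • szegoKernel a + φ • (blaschkeFactor a * f))) ^ 2
          = φ ^ 2 * ∑ i ∈ range n, coeff i (blaschkeFactor a * (szegoKernel β - f)) ^ 2 := by
            simp only [hres, coeff_smul, smul_eq_mul, mul_pow, mul_sum]
        _ ≤ φ ^ 2 * ((∏ b ∈ S, (β - b) / (1 - b * β)) ^ 2 * (1 - β ^ 2)⁻¹) := by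
            gcongr
            exact (sum_coeff_blaschkeFactor_mul_sq_le ha _ n).trans (hfβ n)
        _ = (∏ b ∈ insert a S, (β - b) / (1 - b * β)) ^ 2 * (1 - β ^ 2)⁻¹ := by
            rw [prod_insert haS]; ring

end Blaschke

section Nodes

theorem tanh_sub_div_one_sub_tanh_mul_tanh (x y : ℝ) :
    (Real.tanh x - Real.tanh y) / (1 - Real.tanh y * Real.tanh x) = Real.tanh (x - y) := by
  have hx := (Real.cosh_pos x).ne'
  have hy := (Real.cosh_pos y).ne'
  rw [Real.tanh_eq_sinh_div_cosh (x - y), Real.sinh_sub, Real.cosh_sub,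
    Real.tanh_eq_sinh_div_cosh, Real.tanh_eq_sinh_div_cosh]
  field_simp

theorem one_sub_div_one_add_le_exp {u : ℝ} (h0 : 0 ≤ u) (h1 : u ≤ 1) :
    (1 - u) / (1 + u) ≤ Real.exp (-2 * u) := by
  rcases h1.eq_or_lt with rfl | h1
  · simpa using Real.exp_nonneg _
  have hlog : 2 * u ≤ Real.log ((1 + u) / (1 - u)) := by
    have := Real.sum_range_le_log_div h0 h1 1
    norm_num at this
    linarith
  have hpos : 0 < (1 + u) / (1 - u) := div_pos (by linarith) (by linarith)
  rw [Real.le_log_iff_exp_le hpos] at hlog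
  rw [← inv_div, neg_mul, Real.exp_neg]
  exact inv_anti₀ (Real.exp_pos _) hlog

theorem abs_tanh_half_le_exp (x : ℝ) :
    |Real.tanh (x / 2)| ≤ Real.exp (-2 * Real.exp (-|x|)) := by
  wlog hx : 0 ≤ x generalizing x
  · simpa [neg_div] using this (-x) (by linarith)
  have htanh : Real.tanh (x / 2) = (1 - Real.exp (-x)) / (1 + Real.exp (-x)) := by
    have hsq : Real.exp (-x) = Real.exp (-(x / 2)) ^ 2 := by
      rw [← Real.exp_nat_mul]; ring_nf
    have hinv : Real.exp (x / 2) = (Real.exp (-(x / 2)))⁻¹ := by rw [Real.exp_neg, inv_inv]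
    have := Real.exp_pos (-(x / 2))
    rw [Real.tanh_eq, hinv, hsq]
    field_simp
  have hexp : Real.exp (-x) ≤ 1 := Real.exp_le_one_iff.2 (by linarith)
  rw [abs_of_nonneg hx, htanh, abs_of_nonneg (div_nonneg (by linarith) (by positivity))]
  exact one_sub_div_one_add_le_exp (Real.exp_nonneg _) hexp

theorem integral_exp_neg_abs_sub {a b t : ℝ} (ha : a ≤ t) (hb : t ≤ b) :
    ∫ s in a..b, Real.exp (-|t - s|) = 2 - Real.exp (a - t) - Real.exp (t - b) := by
  have hint (c d : ℝ) : IntervalIntegrable (fun s => Real.exp (-|t - s|)) volume c d :=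
    Continuous.intervalIntegrable (by fun_prop) _ _
  have left : ∫ s in a..t, Real.exp (-|t - s|) = 1 - Real.exp (a - t) := by
    rw [intervalIntegral.integral_congr (g := fun s => Real.exp (s - t)) fun s hs => ?_]
    · simp [intervalIntegral.integral_comp_sub_right Real.exp]
    · rw [Set.uIcc_of_le ha] at hs
      simp [abs_of_nonneg (sub_nonneg.2 hs.2)]
  have right : ∫ s in t..b, Real.exp (-|t - s|) = 1 - Real.exp (t - b) := by
    rw [intervalIntegral.integral_congr (g := fun s => Real.exp (t - s)) fun s hs => ?_]
    · simp [intervalIntegral.integral_comp_sub_left Real.exp]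
    · rw [Set.uIcc_of_le hb] at hs
      simp [abs_of_nonpos (sub_nonpos.2 hs.1)]
  rw [← intervalIntegral.integral_add_adjacent_intervals (hint a t) (hint t b), left, right]
  ring

theorem integral_exp_neg_abs_sub_le_sum (t a : ℝ) {η : ℝ} (hη : 0 ≤ η) (k : ℕ) :
    ∫ s in a..a + k * η, Real.exp (-|t - s|) ≤
      η * Real.exp η * ∑ j ∈ range k, Real.exp (-|t - (a + j * η)|) := by
  have hint (c d : ℝ) : IntervalIntegrable (fun s => Real.exp (-|t - s|)) volume c d :=
    Continuous.intervalIntegrable (by fun_prop) _ _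
  have hstep (c : ℝ) :
      ∫ s in c..c + η, Real.exp (-|t - s|) ≤ η * Real.exp η * Real.exp (-|t - c|) := by
    calc ∫ s in c..c + η, Real.exp (-|t - s|)
        ≤ ∫ _ in c..c + η, Real.exp (η + -|t - c|) := by
          refine intervalIntegral.integral_mono_on (by linarith) (hint _ _) (by simp)
            fun s hs => Real.exp_le_exp.2 ?_
          have hsc : |s - c| ≤ η := abs_le.2 ⟨by linarith [hs.1], by linarith [hs.2]⟩
          linarith [abs_sub_le t s c]
      _ = η * Real.exp η * Real.exp (-|t - c|) := by simp [Real.exp_add, mul_assoc, mul_left_comm]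
  induction k with
  | zero => simp
  | succ k ih =>
    have hend : a + (k + 1 : ℕ) * η = a + k * η + η := by push_cast; ring
    rw [sum_range_succ, mul_add, hend,
      ← intervalIntegral.integral_add_adjacent_intervals (hint a (a + k * η)) (hint _ _)]
    exact add_le_add ih (hstep _)

theorem two_mul_one_sub_exp_mul_le_sum {T M t : ℝ} (hM : 0 ≤ M) (ht : t ∈ Set.Icc 0 T)
    (hT : 0 < T + 2 * M) {k : ℕ} (hk : 0 < k) :
    2 * (1 - Real.exp (-M)) * (k / (T + 2 * M) - 1) ≤
      ∑ j ∈ range k, Real.exp (-|t - (-M + j * ((T + 2 * M) / k))|) := by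
  set η := (T + 2 * M) / k with hη
  have hη0 : 0 < η := by positivity
  set S := ∑ j ∈ range k, Real.exp (-|t - (-M + j * η)|)
  have hend : -M + k * η = T + M := by rw [hη]; field_simp; ring
  have hS : 2 * (1 - Real.exp (-M)) ≤ η * Real.exp η * S := by
    have h := integral_exp_neg_abs_sub_le_sum t (-M) hη0.le k
    rw [hend, integral_exp_neg_abs_sub (by linarith [ht.1]) (by linarith [ht.2])] at h
    have h0 : Real.exp (-M - t) ≤ Real.exp (-M) := Real.exp_le_exp.2 (by linarith [ht.1])
    have hT : Real.exp (t - (T + M)) ≤ Real.exp (-M) := Real.exp_le_exp.2 (by linarith [ht.2])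
    linarith
  have hexp : k / (T + 2 * M) - 1 ≤ Real.exp (-η) / η := by
    rw [← inv_div, ← hη, le_div_iff₀ hη0, sub_mul, inv_mul_cancel₀ hη0.ne']
    linarith [Real.add_one_le_exp (-η)]
  have hM' : 0 ≤ 1 - Real.exp (-M) := sub_nonneg.2 (Real.exp_le_one_iff.2 (by linarith))
  calc 2 * (1 - Real.exp (-M)) * (k / (T + 2 * M) - 1)
      ≤ 2 * (1 - Real.exp (-M)) * (Real.exp (-η) / η) := by gcongr
    _ ≤ η * Real.exp η * S * (Real.exp (-η) / η) := by gcongr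
    _ = S := by rw [Real.exp_neg]; field_simp

-- Without nodes at distance up to `M` beyond the ends of `[0, T]`, the sum
-- `∑ exp (-|t - node|)` at an end point `t` would be only about half of its value inside.
theorem exists_finset_abs_prod_blaschke_le {T M : ℝ} (hM : 0 ≤ M) (hT : 0 < T + 2 * M) {k : ℕ}
    (hk : 0 < k) :
    ∃ S : Finset ℝ, #S ≤ k ∧ (∀ b ∈ S, |b| < 1) ∧ ∀ t ∈ Set.Icc 0 T,
      |∏ b ∈ S, (Real.tanh (t / 2) - b) / (1 - b * Real.tanh (t / 2))| ≤
        Real.exp (-4 * (1 - Real.exp (-M)) * (k / (T + 2 * M) - 1)) := by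
  set node : ℕ → ℝ := fun j => -M + j * ((T + 2 * M) / k)
  have hinj : Function.Injective fun j => Real.tanh (node j / 2) := by
    intro i j hij
    have hη : (T + 2 * M) / k ≠ 0 := by positivity
    simpa [node, hη] using Real.tanh_injective hij
  refine ⟨(range k).image fun j => Real.tanh (node j / 2), ?_, ?_, fun t ht => ?_⟩
  · simpa using card_image_le (s := range k)
  · simp [Real.abs_tanh_lt_one]
  · rw [prod_image hinj.injOn, abs_prod]
    calc ∏ j ∈ range k, |(Real.tanh (t / 2) - Real.tanh (node j / 2)) /
            (1 - Real.tanh (node j / 2) * Real.tanh (t / 2))|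
        ≤ ∏ j ∈ range k, Real.exp (-2 * Real.exp (-|t - node j|)) := by
          refine prod_le_prod (fun _ _ => abs_nonneg _) fun j _ => ?_
          rw [tanh_sub_div_one_sub_tanh_mul_tanh, ← sub_div]
          exact abs_tanh_half_le_exp _
      _ = Real.exp (-2 * ∑ j ∈ range k, Real.exp (-|t - node j|)) := by
          rw [← Real.exp_sum, mul_sum]
      _ ≤ Real.exp (-4 * (1 - Real.exp (-M)) * (k / (T + 2 * M) - 1)) := by
          rw [Real.exp_le_exp]
          linarith [two_mul_one_sub_exp_mul_le_sum hM ht hT hk]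

end Nodes

section CourantFischer

variable {E : Type*} [NormedAddCommGroup E] [InnerProductSpace ℝ E] {ι : Type*} [Fintype ι]
  {b : OrthonormalBasis ι ℝ E} {lam : ι → ℝ} {T : E →ₗ[ℝ] E}

theorem inner_apply_self_eq_sum_of_eigenbasis (hT : ∀ i, T (b i) = lam i • b i) (x : E) :
    ⟪x, T x⟫_ℝ = ∑ i, lam i * ⟪b i, x⟫_ℝ ^ 2 := by
  have hTx : T x = ∑ i, (⟪b i, x⟫_ℝ * lam i) • b i := by
    conv_lhs => rw [← b.sum_repr' x]
    simp only [map_sum, map_smul, hT, smul_smul]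
  simp only [hTx, inner_sum, inner_smul_right, real_inner_comm x]
  exact sum_congr rfl fun i _ => by ring

theorem inner_apply_self_le_of_eigenbasis (hT : ∀ i, T (b i) = lam i • b i) {C : ℝ} {x : E}
    (hx : ∀ i, ⟪b i, x⟫_ℝ = 0 ∨ lam i ≤ C) : ⟪x, T x⟫_ℝ ≤ C * ‖x‖ ^ 2 := by
  rw [inner_apply_self_eq_sum_of_eigenbasis hT, ← b.sum_sq_inner_right, mul_sum]
  refine sum_le_sum fun i _ => ?_
  rcases hx i with h | h
  · simp [h]
  · gcongr

theorem le_inner_apply_self_of_eigenbasis (hT : ∀ i, T (b i) = lam i • b i) {c : ℝ} {x : E}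
    (hx : ∀ i, ⟪b i, x⟫_ℝ = 0 ∨ c ≤ lam i) : c * ‖x‖ ^ 2 ≤ ⟪x, T x⟫_ℝ := by
  rw [inner_apply_self_eq_sum_of_eigenbasis hT, ← b.sum_sq_inner_right, mul_sum]
  refine sum_le_sum fun i _ => ?_
  rcases hx i with h | h
  · simp [h]
  · gcongr

theorem exists_mem_ne_zero_mem_orthogonal_of_finrank_lt {U W : Submodule ℝ E}
    [FiniteDimensional ℝ U] [FiniteDimensional ℝ W] (h : finrank ℝ U < finrank ℝ W) :
    ∃ x ∈ W, x ∈ Uᗮ ∧ x ≠ 0 := by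
  obtain ⟨x, hx, hx0⟩ := Submodule.exists_mem_ne_zero_of_ne_bot <|
    LinearMap.ker_ne_bot_of_finrank_lt (f := U.orthogonalProjectionOnto.toLinearMap ∘ₗ W.subtype) h
  exact ⟨x, x.2, by simpa using hx, by simpa using hx0⟩

theorem eigenvalue_le_of_forall_mem_orthogonal {n : ℕ}
    {b : OrthonormalBasis (Fin n) ℝ E} {lam : Fin n → ℝ}
    (hlam : Antitone lam) (hT : ∀ i, T (b i) = lam i • b i) (U : Submodule ℝ E) {i : Fin n}
    (hU : finrank ℝ U ≤ i) {C : ℝ} (hC : ∀ x ∈ Uᗮ, ⟪x, T x⟫_ℝ ≤ C * ‖x‖ ^ 2) :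
    lam i ≤ C := by
  have : FiniteDimensional ℝ E := b.toBasis.finiteDimensional_of_finite
  set W := Submodule.span ℝ (Set.range fun j : Set.Iic i => b j)
  have hW : finrank ℝ W = i + 1 := by
    rw [← Fin.card_Iic, ← Fintype.card_coe]
    have hli := b.orthonormal.linearIndependent.comp _ (Subtype.coe_injective (p := (· ≤ i)))
    exact (finrank_span_eq_card hli).trans (by simp)
  obtain ⟨x, hxW, hxU, hx0⟩ :=
    exists_mem_ne_zero_mem_orthogonal_of_finrank_lt (U := U) (W := W) (by omega)
  have hx (j : Fin n) : ⟪b j, x⟫_ℝ = 0 ∨ lam i ≤ lam j := by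
    refine (le_or_gt j i).elim (fun hji => .inr (hlam hji)) fun hij => .inl ?_
    suffices W ≤ (ℝ ∙ b j)ᗮ from Submodule.mem_orthogonal_singleton_iff_inner_right.1 (this hxW)
    rw [Submodule.span_le]
    rintro _ ⟨l, rfl⟩
    exact Submodule.mem_orthogonal_singleton_iff_inner_right.2
      (b.orthonormal.2 (l.2.trans_lt hij).ne')
  exact le_of_mul_le_mul_right ((le_inner_apply_self_of_eigenbasis hT hx).trans (hC x hxU))
    (by positivity)

end CourantFischer

theorem sq_div_le_integral_of_lipschitz {g : ℝ → ℝ} {a b K x : ℝ} (hx : x ∈ Set.Icc a b)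
    (hg : ContinuousOn g (Set.Icc a b)) (hg0 : ∀ y ∈ Set.Icc a b, 0 ≤ g y) (hK : 0 < K)
    (hlip : ∀ y ∈ Set.Icc a b, g x - g y ≤ K * |x - y|) (hgx : g x ≤ K * (b - a)) :
    g x ^ 2 / (4 * K) ≤ ∫ y in a..b, g y := by
  set ℓ := g x / (2 * K) with hℓ
  have hgx0 : 0 ≤ g x := hg0 x hx
  have hℓ0 : 0 ≤ ℓ := by positivity
  have hKℓ : K * ℓ = g x / 2 := by rw [hℓ]; field_simp
  have hℓb : ℓ ≤ (b - a) / 2 := by rw [hℓ, div_le_iff₀ (by positivity)]; linarith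
  set s := max a (x - ℓ)
  have has : a ≤ s := le_max_left _ _
  have hxs : x ≤ s + ℓ := by linarith [le_max_right a (x - ℓ)]
  have hsx : s ≤ x := max_le hx.1 (by linarith)
  have hsb : s + ℓ ≤ b := by
    rw [← le_sub_iff_add_le]
    exact max_le (by linarith [hx.1, hx.2]) (by linarith [hx.2])
  have hab : a ≤ b := hx.1.trans hx.2
  calc g x ^ 2 / (4 * K) = ∫ _ in s..s + ℓ, g x / 2 := by
        simp only [intervalIntegral.integral_const, smul_eq_mul, hℓ]
        field_simp
        ring
    _ ≤ ∫ y in s..s + ℓ, g y := by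
        refine intervalIntegral.integral_mono_on (by linarith) (by simp) ?_ fun y hy => ?_
        · exact (hg.mono (Set.Icc_subset_Icc has hsb)).intervalIntegrable_of_Icc (by linarith)
        · have hxy : |x - y| ≤ ℓ := abs_le.2 ⟨by linarith [hy.2], by linarith [hy.1]⟩
          have := hlip y ⟨has.trans hy.1, hy.2.trans hsb⟩
          nlinarith
    _ ≤ ∫ y in a..b, g y := by
        refine intervalIntegral.integral_mono_interval has (by linarith) hsb ?_
          (hg.intervalIntegrable_of_Icc hab)
        filter_upwards [ae_restrict_mem measurableSet_Ioc] with y hy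
        exact hg0 y ⟨hy.1.le, hy.2⟩

section SpectralApproximation

variable {E : Type*} [NormedAddCommGroup E] [InnerProductSpace ℝ E]

theorem inner_sq_le_of_mem_orthogonal {U : Submodule ℝ E} {x u y : E} {ε : ℝ} (hx : x ∈ Uᗮ)
    (hu : u ∈ U) (hy : ‖y - u‖ ≤ ε) : ⟪x, y⟫_ℝ ^ 2 ≤ ε ^ 2 * ‖x‖ ^ 2 := by
  have hxy : ⟪x, y⟫_ℝ = ⟪x, y - u⟫_ℝ := by
    rw [inner_sub_right, Submodule.inner_left_of_mem_orthogonal hu hx, sub_zero]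
  rw [hxy, ← mul_pow, ← sq_abs]
  gcongr
  calc |⟪x, y - u⟫_ℝ| ≤ ‖x‖ * ‖y - u‖ := abs_real_inner_le_norm _ _
    _ ≤ ε * ‖x‖ := by rw [mul_comm]; gcongr

theorem abs_sub_inner_sq_le_of_hasDerivAt {μ μ' : ℝ → E} {a b K : ℝ}
    (hμ : ∀ t ∈ Set.Icc a b, HasDerivAt μ (μ' t) t) (hK : ∀ t ∈ Set.Icc a b, ‖μ t‖ * ‖μ' t‖ ≤ K)
    (x : E) {s t : ℝ} (hs : s ∈ Set.Icc a b) (ht : t ∈ Set.Icc a b) :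
    |⟪x, μ t⟫_ℝ ^ 2 - ⟪x, μ s⟫_ℝ ^ 2| ≤ 2 * K * ‖x‖ ^ 2 * |t - s| := by
  have hderiv (r : ℝ) (hr : r ∈ Set.Icc a b) :
      HasDerivWithinAt (fun t => ⟪x, μ t⟫_ℝ ^ 2) (2 * ⟪x, μ r⟫_ℝ * ⟪x, μ' r⟫_ℝ)
        (Set.Icc a b) r := by
    simpa using (((hasDerivAt_const r x).inner ℝ (hμ r hr)).fun_pow 2).hasDerivWithinAt
  refine (convex_Icc a b).norm_image_sub_le_of_norm_hasDerivWithin_le hderiv (fun r hr => ?_) hs ht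
  calc ‖2 * ⟪x, μ r⟫_ℝ * ⟪x, μ' r⟫_ℝ‖ = 2 * |⟪x, μ r⟫_ℝ| * |⟪x, μ' r⟫_ℝ| := by simp
    _ ≤ 2 * (‖x‖ * ‖μ r‖) * (‖x‖ * ‖μ' r‖) := by
      gcongr <;> exact abs_real_inner_le_norm _ _
    _ = 2 * (‖μ r‖ * ‖μ' r‖) * ‖x‖ ^ 2 := by ring
    _ ≤ 2 * K * ‖x‖ ^ 2 := by gcongr; exact hK r hr

theorem eigenvalue_le_sq_of_forall_exists_norm_sub_le {n : ℕ} {e : OrthonormalBasis (Fin n) ℝ E}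
    {lam : Fin n → ℝ} {T : E →ₗ[ℝ] E} (hlam : Antitone lam) (hT : ∀ i, T (e i) = lam i • e i)
    {μ : ℝ → E} {a b : ℝ} (hab : a ≤ b) (hμ : ContinuousOn μ (Set.Icc a b))
    (hTμ : ∀ x, ⟪x, T x⟫_ℝ = ∫ t in a..b, ⟪x, μ t⟫_ℝ ^ 2) {U : Submodule ℝ E} {ε : ℝ}
    (hUμ : ∀ t ∈ Set.Icc a b, ∃ u ∈ U, ‖μ t - u‖ ≤ ε) {i : Fin n}
    (hU : finrank ℝ U ≤ i) : lam i ≤ (b - a) * ε ^ 2 := by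
  refine eigenvalue_le_of_forall_mem_orthogonal hlam hT U hU fun x hx => ?_
  rw [hTμ]
  calc ∫ t in a..b, ⟪x, μ t⟫_ℝ ^ 2 ≤ ∫ _ in a..b, ε ^ 2 * ‖x‖ ^ 2 := by
        have hcont : ContinuousOn (fun t => ⟪x, μ t⟫_ℝ ^ 2) (Set.Icc a b) :=
          (continuousOn_const.inner hμ).pow 2
        refine intervalIntegral.integral_mono_on hab
          (hcont.intervalIntegrable_of_Icc hab) (by simp) fun t ht => ?_
        obtain ⟨u, hu, hut⟩ := hUμ t ht
        exact inner_sq_le_of_mem_orthogonal hx hu hut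
    _ = (b - a) * ε ^ 2 * ‖x‖ ^ 2 := by
        rw [intervalIntegral.integral_const, smul_eq_mul, mul_assoc]

theorem inner_pow_four_le_mul_integral_inner_sq {μ μ' : ℝ → E} {a b : ℝ}
    (hμ : ∀ t ∈ Set.Icc a b, HasDerivAt μ (μ' t) t) {K : ℝ} (hK : 0 < K)
    (hμK : ∀ t ∈ Set.Icc a b, ‖μ t‖ ^ 2 ≤ 2 * K * (b - a))
    (hμμ' : ∀ t ∈ Set.Icc a b, ‖μ t‖ * ‖μ' t‖ ≤ K) (x : E) {α : ℝ}
    (hα : α ∈ Set.Icc a b) :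
    ⟪x, μ α⟫_ℝ ^ 4 ≤ 8 * K * ‖x‖ ^ 2 * ∫ t in a..b, ⟪x, μ t⟫_ℝ ^ 2 := by
  rcases eq_or_ne x 0 with rfl | hx
  · simp
  have hcont : ContinuousOn (fun t => ⟪x, μ t⟫_ℝ ^ 2) (Set.Icc a b) := fun t ht =>
    ((continuousAt_const.inner (hμ t ht).continuousAt).pow 2).continuousWithinAt
  have hle : ⟪x, μ α⟫_ℝ ^ 2 ≤ 2 * K * ‖x‖ ^ 2 * (b - a) := by
    calc ⟪x, μ α⟫_ℝ ^ 2 ≤ (‖x‖ * ‖μ α‖) ^ 2 := sq_le_sq.2 <| by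
          simpa using abs_real_inner_le_norm x (μ α)
      _ = ‖μ α‖ ^ 2 * ‖x‖ ^ 2 := by ring
      _ ≤ 2 * K * (b - a) * ‖x‖ ^ 2 := by gcongr; exact hμK α hα
      _ = 2 * K * ‖x‖ ^ 2 * (b - a) := by ring
  have h := sq_div_le_integral_of_lipschitz hα hcont (fun _ _ => sq_nonneg _)
    (by positivity : 0 < 2 * K * ‖x‖ ^ 2)
    (fun t ht => (le_abs_self _).trans (abs_sub_inner_sq_le_of_hasDerivAt hμ hμμ' x ht hα))
    hle
  rw [div_le_iff₀ (by positivity)] at h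
  linarith

theorem exists_mem_span_eigenbasis_norm_sub_pow_four_le {n k : ℕ} {e : OrthonormalBasis (Fin n) ℝ E}
    {lam : Fin n → ℝ} {T : E →ₗ[ℝ] E} (hlam : Antitone lam) (hT : ∀ i, T (e i) = lam i • e i)
    {μ μ' : ℝ → E} {a b : ℝ} (hμ : ∀ t ∈ Set.Icc a b, HasDerivAt μ (μ' t) t)
    (hTμ : ∀ x, ⟪x, T x⟫_ℝ = ∫ t in a..b, ⟪x, μ t⟫_ℝ ^ 2) {K : ℝ} (hK : 0 < K)
    (hμK : ∀ t ∈ Set.Icc a b, ‖μ t‖ ^ 2 ≤ 2 * K * (b - a))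
    (hμμ' : ∀ t ∈ Set.Icc a b, ‖μ t‖ * ‖μ' t‖ ≤ K)
    {U : Submodule ℝ E} (hU : finrank ℝ U ≤ k) {ε : ℝ}
    (hUμ : ∀ t ∈ Set.Icc a b, ∃ u ∈ U, ‖μ t - u‖ ≤ ε) (hkn : k ≤ n) {α : ℝ}
    (hα : α ∈ Set.Icc a b) :
    ∃ y ∈ Submodule.span ℝ (Set.range fun i : Fin k => e (Fin.castLE hkn i)),
      ‖μ α - y‖ ^ 4 ≤ 8 * K * (b - a) * ε ^ 2 := by
  set V := Submodule.span ℝ (Set.range fun i : Fin k => e (Fin.castLE hkn i))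
  have : FiniteDimensional ℝ V := FiniteDimensional.span_of_finite ℝ (Set.finite_range _)
  set x := μ α - V.starProjection (μ α) with hx
  refine ⟨V.starProjection (μ α), V.starProjection_apply_mem _, ?_⟩
  rw [← hx]
  have hxV : x ∈ Vᗮ := V.sub_starProjection_mem_orthogonal _
  have hxμ : ⟪x, μ α⟫_ℝ = ‖x‖ ^ 2 := by
    calc ⟪x, μ α⟫_ℝ = ⟪x, μ α⟫_ℝ - ⟪x, V.starProjection (μ α)⟫_ℝ := by
          rw [Submodule.inner_left_of_mem_orthogonal (V.starProjection_apply_mem _) hxV, sub_zero]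
      _ = ⟪x, x⟫_ℝ := (inner_sub_right _ _ _).symm
      _ = ‖x‖ ^ 2 := real_inner_self_eq_norm_sq x
  have hab : a ≤ b := hα.1.trans hα.2
  have hxT : ⟪x, T x⟫_ℝ ≤ (b - a) * ε ^ 2 * ‖x‖ ^ 2 := by
    refine inner_apply_self_le_of_eigenbasis hT fun i => ?_
    rcases lt_or_ge (i : ℕ) k with hi | hi
    · exact .inl (hxV _ (Submodule.subset_span ⟨⟨i, hi⟩, rfl⟩))
    · exact .inr (eigenvalue_le_sq_of_forall_exists_norm_sub_le hlam hT hab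
        (fun t ht => (hμ t ht).continuousAt.continuousWithinAt) hTμ hUμ (hU.trans hi))
  rcases eq_or_ne ‖x‖ 0 with h0 | h0
  · rw [h0, zero_pow four_ne_zero]
    have := sub_nonneg.2 hab
    positivity
  refine le_of_mul_le_mul_right ?_ (by positivity : 0 < ‖x‖ ^ 4)
  calc ‖x‖ ^ 4 * ‖x‖ ^ 4 = ⟪x, μ α⟫_ℝ ^ 4 := by rw [hxμ]; ring
    _ ≤ 8 * K * ‖x‖ ^ 2 * ⟪x, T x⟫_ℝ := by
        rw [hTμ]
        exact inner_pow_four_le_mul_integral_inner_sq hμ hK hμK hμμ' x hα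
    _ ≤ 8 * K * ‖x‖ ^ 2 * ((b - a) * ε ^ 2 * ‖x‖ ^ 2) := by gcongr
    _ = 8 * K * (b - a) * ε ^ 2 * ‖x‖ ^ 4 := by ring

end SpectralApproximation

section Impulse

theorem one_sub_pow_three_mul_sum_succ_sq_mul_pow {R : Type*} [CommRing R] (r : R) (n : ℕ) :
    (1 - r) ^ 3 * ∑ i ∈ range n, ((i + 1 : R) ^ 2 * r ^ i) =
      1 + r - r ^ n * ((n * (1 - r) + 1) ^ 2 + r) := by
  induction n with
  | zero => simp
  | succ n ih =>
    rw [sum_range_succ, mul_add, ih]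
    push_cast
    ring

/-- The derivative of `α ↦ μ_L(α)`, with entries `(1 - α) i α^(i-1) - α^i` for `i = 0, …, L-1`. -/
noncomputable def impulseDeriv (L : ℕ) (α : ℝ) : Fin L → ℝ :=
  fun i => (1 - α) * (i * α ^ (i - 1 : ℕ)) - α ^ (i : ℕ)

theorem hasDerivAt_toLp_impulse (L : ℕ) (α : ℝ) :
    HasDerivAt (fun t => WithLp.toLp 2 (impulse L t)) (WithLp.toLp 2 (impulseDeriv L α)) α := by
  have h : HasDerivAt (impulse L) (impulseDeriv L α) α := hasDerivAt_pi.2 fun i => by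
    simpa [impulse, impulseDeriv, sub_eq_neg_add] using
      ((hasDerivAt_id α).const_sub 1).fun_mul (hasDerivAt_pow (i : ℕ) α)
  exact (PiLp.continuousLinearEquiv 2 ℝ fun _ : Fin L => ℝ).symm.hasFDerivAt.comp_hasDerivAt α h

theorem one_sub_mul_norm_toLp_pow_sq_le {a : ℝ} (h0 : 0 ≤ a) (h1 : a ≤ 1) (L : ℕ) :
    (1 - a) * ‖WithLp.toLp 2 fun i : Fin L => a ^ (i : ℕ)‖ ^ 2 ≤ 1 := by
  calc (1 - a) * ‖WithLp.toLp 2 fun i : Fin L => a ^ (i : ℕ)‖ ^ 2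
      = (1 - a) * ∑ i ∈ range L, (a ^ i) ^ 2 := by
        simp [EuclideanSpace.real_norm_sq_eq, Fin.sum_univ_eq_sum_range fun i => (a ^ i) ^ 2]
    _ ≤ (1 - a) * ∑ i ∈ range L, a ^ i := by
        have : 0 ≤ 1 - a := sub_nonneg.2 h1
        gcongr with i
        exact pow_le_of_le_one (by positivity) (pow_le_one₀ h0 h1) two_ne_zero
    _ = 1 - a ^ L := mul_neg_geom_sum a L
    _ ≤ 1 := sub_le_self _ (by positivity)

theorem one_sub_pow_three_mul_norm_toLp_mul_pow_sq_le {a : ℝ} (ha : 0 ≤ a) (L : ℕ) :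
    (1 - a) ^ 3 * ‖WithLp.toLp 2 fun i : Fin L => (i : ℝ) * a ^ (i - 1 : ℕ)‖ ^ 2 ≤ 1 := by
  cases L with
  | zero => simp [EuclideanSpace.real_norm_sq_eq]
  | succ n =>
    have hnorm : ‖WithLp.toLp 2 fun i : Fin (n + 1) => (i : ℝ) * a ^ (i - 1 : ℕ)‖ ^ 2 =
        ∑ i ∈ range n, (i + 1 : ℝ) ^ 2 * (a ^ 2) ^ i := by
      simp [EuclideanSpace.real_norm_sq_eq, Fin.sum_univ_succ, mul_pow, pow_right_comm a _ 2,
        Fin.sum_univ_eq_sum_range fun i => (i + 1 : ℝ) ^ 2 * (a ^ 2) ^ i]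
    rw [hnorm]
    refine le_of_mul_le_mul_left ?_ (by positivity : 0 < (1 + a) ^ 3)
    calc (1 + a) ^ 3 * ((1 - a) ^ 3 * ∑ i ∈ range n, (i + 1 : ℝ) ^ 2 * (a ^ 2) ^ i)
        = (1 - a ^ 2) ^ 3 * ∑ i ∈ range n, (i + 1 : ℝ) ^ 2 * (a ^ 2) ^ i := by ring
      _ ≤ 1 + a ^ 2 := by
          rw [one_sub_pow_three_mul_sum_succ_sq_mul_pow]
          exact sub_le_self _ (by positivity)
      _ ≤ (1 + a) ^ 3 * 1 := by nlinarith [pow_nonneg ha 3]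

theorem toLp_impulse (L : ℕ) (α : ℝ) :
    WithLp.toLp 2 (impulse L α) = (1 - α) • WithLp.toLp 2 fun i : Fin L => α ^ (i : ℕ) := rfl

theorem norm_toLp_impulse_le_one {α : ℝ} (hα : α ∈ Set.Icc (0 : ℝ) 1) (L : ℕ) :
    ‖WithLp.toLp 2 (impulse L α)‖ ≤ 1 := by
  have h := one_sub_mul_norm_toLp_pow_sq_le hα.1 hα.2 L
  rw [toLp_impulse, norm_smul, Real.norm_of_nonneg (sub_nonneg.2 hα.2),
    ← sq_le_one_iff₀ (mul_nonneg (sub_nonneg.2 hα.2) (norm_nonneg _))]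
  nlinarith [hα.1, hα.2]

theorem norm_toLp_impulse_mul_norm_toLp_impulseDeriv_le {α : ℝ} (hα : α ∈ Set.Icc (0 : ℝ) 1)
    (L : ℕ) : ‖WithLp.toLp 2 (impulse L α)‖ * ‖WithLp.toLp 2 (impulseDeriv L α)‖ ≤ 2 := by
  set g : EuclideanSpace ℝ (Fin L) := WithLp.toLp 2 fun i => α ^ (i : ℕ)
  set g' : EuclideanSpace ℝ (Fin L) := WithLp.toLp 2 fun i => i * α ^ (i - 1 : ℕ)
  have hα' : 0 ≤ 1 - α := sub_nonneg.2 hα.2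
  have hg : (1 - α) * ‖g‖ ^ 2 ≤ 1 := one_sub_mul_norm_toLp_pow_sq_le hα.1 hα.2 L
  have hg' : (1 - α) ^ 3 * ‖g'‖ ^ 2 ≤ 1 :=
    one_sub_pow_three_mul_norm_toLp_mul_pow_sq_le hα.1 L
  have hgg' : (1 - α) ^ 2 * (‖g‖ * ‖g'‖) ≤ 1 := by
    rw [← sq_le_one_iff₀ (by positivity)]
    calc ((1 - α) ^ 2 * (‖g‖ * ‖g'‖)) ^ 2
        = ((1 - α) * ‖g‖ ^ 2) * ((1 - α) ^ 3 * ‖g'‖ ^ 2) := by ring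
      _ ≤ 1 := mul_le_one₀ hg (by positivity) hg'
  calc ‖WithLp.toLp 2 (impulse L α)‖ * ‖WithLp.toLp 2 (impulseDeriv L α)‖
      = ‖(1 - α) • g‖ * ‖(1 - α) • g' - g‖ := rfl
    _ ≤ ‖(1 - α) • g‖ * (‖(1 - α) • g'‖ + ‖g‖) := by gcongr; exact norm_sub_le _ _
    _ = (1 - α) * ‖g‖ ^ 2 + (1 - α) ^ 2 * (‖g‖ * ‖g'‖) := by
        simp only [norm_smul, Real.norm_of_nonneg hα']
        ring
    _ ≤ 2 := by linarith

theorem integral_one_sub_sq_mul_pow (n : ℕ) :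
    ∫ t in (0 : ℝ)..1, (1 - t) ^ 2 * t ^ n = 2 / ((n + 2 : ℝ) ^ 3 - (n + 2)) := by
  have hint (m : ℕ) : IntervalIntegrable (fun t : ℝ => t ^ m) volume 0 1 := by simp
  have hexpand (t : ℝ) : (1 - t) ^ 2 * t ^ n = t ^ n - 2 * t ^ (n + 1) + t ^ (n + 2) := by ring
  have hden : (n + 2 : ℝ) ^ 3 - (n + 2) = (n + 1) * (n + 2) * (n + 3) := by ring
  simp only [hexpand]
  rw [intervalIntegral.integral_add ((hint n).sub ((hint _).const_mul 2)) (hint _),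
    intervalIntegral.integral_sub (hint n) ((hint _).const_mul 2),
    intervalIntegral.integral_const_mul, integral_pow, integral_pow, integral_pow, hden]
  push_cast
  simp only [one_pow, zero_pow (Nat.succ_ne_zero _)]
  field_simp
  ring

theorem inner_toEuclideanLin_hankel_self {L : ℕ} (x : EuclideanSpace ℝ (Fin L)) :
    ⟪x, (hankel L).toEuclideanLin x⟫_ℝ =
      ∫ t in (0 : ℝ)..1, ⟪x, WithLp.toLp 2 (impulse L t)⟫_ℝ ^ 2 := by
  have hsq (t : ℝ) : ⟪x, WithLp.toLp 2 (impulse L t)⟫_ℝ ^ 2 =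
      ∑ i, ∑ j, x i * x j * ((1 - t) ^ 2 * t ^ (i + j : ℕ)) := by
    simp only [PiLp.inner_apply, RCLike.inner_apply, conj_trivial, sq (∑ _, _), sum_mul_sum,
      impulse]
    exact sum_congr rfl fun i _ => sum_congr rfl fun j _ => by ring
  have hint (f : ℝ → ℝ) (hf : Continuous f) : IntervalIntegrable f volume 0 1 :=
    hf.intervalIntegrable _ _
  simp only [hsq]
  rw [intervalIntegral.integral_finsetSum fun i _ => hint _ (by fun_prop)]
  simp only [PiLp.inner_apply, Matrix.ofLp_toLpLin, Matrix.toLin'_apply, Matrix.mulVec, dotProduct,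
    RCLike.inner_apply, conj_trivial, sum_mul]
  refine sum_congr rfl fun i _ => ?_
  rw [intervalIntegral.integral_finsetSum fun j _ => hint _ (by fun_prop)]
  refine sum_congr rfl fun j _ => ?_
  rw [intervalIntegral.integral_const_mul, integral_one_sub_sq_mul_pow, hankel]
  push_cast
  ring

end Impulse

section Approximation

/-- The first `L` coefficients of `f(RX)`. Undoing a contraction `α ↦ α / R` of the parameter of a
Szegő kernel in this way costs at most a factor `R ^ L` in norm. -/
noncomputable def truncRescale (L : ℕ) (R : ℝ) : ℝ⟦X⟧ →ₗ[ℝ] EuclideanSpace ℝ (Fin L) where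
  toFun f := WithLp.toLp 2 fun i => coeff i (rescale R f)
  map_add' f g := by ext; simp
  map_smul' c f := by ext; simp [mul_left_comm]

theorem norm_truncRescale_sq_le {R : ℝ} (hR : 1 ≤ R) (L : ℕ) (f : ℝ⟦X⟧) :
    ‖truncRescale L R f‖ ^ 2 ≤ (R ^ L) ^ 2 * ∑ i ∈ range L, coeff i f ^ 2 := by
  rw [EuclideanSpace.real_norm_sq_eq, mul_sum, ← Fin.sum_univ_eq_sum_range
    fun i => (R ^ L) ^ 2 * coeff i f ^ 2]
  refine sum_le_sum fun i _ => ?_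
  rw [← mul_pow]
  simp only [truncRescale, LinearMap.coe_mk, AddHom.coe_mk, coeff_rescale, mul_pow]
  gcongr
  exact i.2.le

theorem toLp_impulse_eq_smul_truncRescale {R : ℝ} (hR : R ≠ 0) (L : ℕ) (α : ℝ) :
    WithLp.toLp 2 (impulse L α) = (1 - α) • truncRescale L R (szegoKernel (α / R)) := by
  ext i
  simp [truncRescale, szegoKernel, impulse, ← mul_pow, mul_div_cancel₀ _ hR]

theorem exists_mem_map_truncRescale_norm_impulse_sub_le {R : ℝ} (hR : 1 < R) (S : Finset ℝ)
    (hS : ∀ b ∈ S, |b| < 1) (L : ℕ) {α : ℝ} (hα : α ∈ Set.Icc (0 : ℝ) 1) :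
    ∃ u ∈ (Submodule.span ℝ (szegoKernel '' (S : Set ℝ))).map (truncRescale L R),
      ‖WithLp.toLp 2 (impulse L α) - u‖ ≤ R ^ L * |∏ b ∈ S, (α / R - b) / (1 - b * (α / R))| := by
  set β := α / R
  set P := ∏ b ∈ S, (β - b) / (1 - b * β)
  have hβ0 : 0 ≤ β := div_nonneg hα.1 (by positivity)
  have hβα : β ≤ α := div_le_self hα.1 hR.le
  have hβ1 : β < 1 := (div_lt_one (by positivity)).2 (hα.2.trans_lt hR)
  obtain ⟨f, hf, hfβ⟩ :=
    exists_mem_span_szegoKernel_sum_coeff_sub_sq_le S hS (abs_lt.2 ⟨by linarith, hβ1⟩)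
  refine ⟨(1 - α) • truncRescale L R f, Submodule.smul_mem _ _ (Submodule.mem_map_of_mem hf), ?_⟩
  have hαβ : (1 - α) ^ 2 * (1 - β ^ 2)⁻¹ ≤ 1 := by
    rw [← div_eq_mul_inv, div_le_one (by nlinarith)]
    nlinarith [hα.2]
  rw [← sq_le_sq₀ (norm_nonneg _) (by positivity), mul_pow, sq_abs,
    toLp_impulse_eq_smul_truncRescale (by positivity : R ≠ 0), ← smul_sub, ← map_sub, norm_smul,
    mul_pow, Real.norm_eq_abs, sq_abs]
  calc (1 - α) ^ 2 * ‖truncRescale L R (szegoKernel β - f)‖ ^ 2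
      ≤ (1 - α) ^ 2 * ((R ^ L) ^ 2 * (P ^ 2 * (1 - β ^ 2)⁻¹)) := by
        gcongr
        exact (norm_truncRescale_sq_le hR.le L _).trans (by gcongr; exact hfβ L)
    _ = (R ^ L) ^ 2 * P ^ 2 * ((1 - α) ^ 2 * (1 - β ^ 2)⁻¹) := by ring
    _ ≤ (R ^ L) ^ 2 * P ^ 2 := mul_le_of_le_one_right (by positivity) hαβ

theorem finrank_map_span_image_le_card {K V W ι : Type*} [DivisionRing K] [AddCommGroup V]
    [Module K V] [AddCommGroup W] [Module K W] (f : V →ₗ[K] W) (g : ι → V) (S : Finset ι) :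
    finrank K ((Submodule.span K (g '' S)).map f) ≤ #S := by
  classical
  rw [Submodule.map_span, ← Set.image_comp, ← coe_image]
  exact (finrank_span_finset_le_card _).trans card_image_le

theorem exists_submodule_norm_impulse_sub_le {R M : ℝ} (hR : 1 < R) (hM : 0 ≤ M) {k : ℕ}
    (hk : 0 < k) (L : ℕ) :
    ∃ U : Submodule ℝ (EuclideanSpace ℝ (Fin L)), finrank ℝ U ≤ k ∧
      ∀ α ∈ Set.Icc (0 : ℝ) 1, ∃ u ∈ U, ‖WithLp.toLp 2 (impulse L α) - u‖ ≤
        R ^ L * Real.exp (-4 * (1 - Real.exp (-M)) *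
          (k / (2 * Real.artanh R⁻¹ + 2 * M) - 1)) := by
  have hR0 : 0 < R⁻¹ := by positivity
  have hR1 : R⁻¹ < 1 := inv_lt_one_of_one_lt₀ hR
  have hT : 0 < Real.artanh R⁻¹ := Real.artanh_pos ⟨hR0, hR1⟩
  obtain ⟨S, hSk, hS, hprod⟩ :=
    exists_finset_abs_prod_blaschke_le hM (by positivity : 0 < 2 * Real.artanh R⁻¹ + 2 * M) hk
  refine ⟨_, (finrank_map_span_image_le_card (truncRescale L R) szegoKernel S).trans hSk,
    fun α hα => ?_⟩
  obtain ⟨u, hu, huα⟩ := exists_mem_map_truncRescale_norm_impulse_sub_le hR S hS L hα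
  have hβ0 : 0 ≤ α / R := div_nonneg hα.1 (by positivity)
  have hβR : α / R ≤ R⁻¹ := by
    rw [div_eq_mul_inv]
    exact mul_le_of_le_one_left hR0.le hα.2
  have hmem : 2 * Real.artanh (α / R) ∈ Set.Icc 0 (2 * Real.artanh R⁻¹) :=
    ⟨mul_nonneg zero_le_two (Real.artanh_nonneg hβ0),
      mul_le_mul_of_nonneg_left (Real.artanh_le_artanh (by linarith) hR1 hβR) zero_le_two⟩
  have htanh : Real.tanh (2 * Real.artanh (α / R) / 2) = α / R := by
    rw [mul_div_cancel_left₀ _ two_ne_zero, Real.tanh_artanh ⟨by linarith, by linarith⟩]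
  refine ⟨u, hu, huα.trans ?_⟩
  gcongr
  simpa only [htanh] using hprod _ hmem

theorem two_mul_artanh_inv_one_add_inv {x : ℝ} (hx : 0 < x) :
    2 * Real.artanh (1 + x⁻¹)⁻¹ = Real.log (2 * x + 1) := by
  have h1 : (1 + x⁻¹)⁻¹ ≤ 1 := inv_le_one_of_one_le₀ (by linarith [inv_pos.2 hx])
  rw [Real.artanh_eq_half_log ⟨by linarith [show 0 ≤ (1 + x⁻¹)⁻¹ by positivity], h1⟩]
  have : (1 + (1 + x⁻¹)⁻¹) / (1 - (1 + x⁻¹)⁻¹) = 2 * x + 1 := by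
    have : x + 1 ≠ 0 := by positivity
    field_simp
    ring
  rw [this]
  ring

-- The factor `3 / 2` is tied to the margin `M = log 4`: it turns the decay rate
-- `4 (1 - exp (-M)) = 3` into the rate `2` needed for `ε`, the error in the theorem being `O(√ε)`.
theorem log_two_mul_add_one_add_two_mul_log_four_le {x : ℝ} (hx : 2000 ≤ x) :
    Real.log (2 * x + 1) + 2 * Real.log 4 ≤ 3 / 2 * Real.log x := by
  have hlog : 2 * (Real.log (2 * x + 1) + 2 * Real.log 4) ≤ 3 * Real.log x := by
    calc 2 * (Real.log (2 * x + 1) + 2 * Real.log 4) = Real.log ((2 * x + 1) ^ 2 * 4 ^ 4) := by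
          rw [Real.log_mul (by positivity) (by norm_num), Real.log_pow, Real.log_pow]
          push_cast
          ring
      _ ≤ Real.log (x ^ 3) := Real.log_le_log (by positivity) (by nlinarith [sq_nonneg x])
      _ = 3 * Real.log x := by rw [Real.log_pow]; norm_num
  linarith

theorem exists_submodule_norm_impulse_sub_le_exp {L k : ℕ} (hL : 2000 ≤ L) (hk : 0 < k) :
    ∃ U : Submodule ℝ (EuclideanSpace ℝ (Fin L)), finrank ℝ U ≤ k ∧
      ∀ α ∈ Set.Icc (0 : ℝ) 1, ∃ u ∈ U, ‖WithLp.toLp 2 (impulse L α) - u‖ ≤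
        Real.exp 4 * Real.exp (-2 * (k / Real.log L)) := by
  have hL' : (2000 : ℝ) ≤ L := mod_cast hL
  have hL0 : 0 < (L : ℝ) := by positivity
  have hlog4 : 0 < Real.log 4 := Real.log_pos (by norm_num)
  have hlogL : 0 < Real.log (2 * L + 1) := Real.log_pos (by linarith)
  obtain ⟨U, hUk, hU⟩ := exists_submodule_norm_impulse_sub_le (R := 1 + (L : ℝ)⁻¹)
    (lt_add_of_pos_right 1 (inv_pos.2 hL0)) hlog4.le hk L
  refine ⟨U, hUk, fun α hα => ?_⟩
  obtain ⟨u, hu, huα⟩ := hU α hα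
  refine ⟨u, hu, huα.trans ?_⟩
  have hRL : (1 + (L : ℝ)⁻¹) ^ L ≤ Real.exp 1 := by
    calc (1 + (L : ℝ)⁻¹) ^ L ≤ Real.exp (L : ℝ)⁻¹ ^ L := by
          gcongr
          linarith [Real.add_one_le_exp (L : ℝ)⁻¹]
      _ = Real.exp 1 := by rw [← Real.exp_nat_mul, mul_inv_cancel₀ hL0.ne']
  rw [two_mul_artanh_inv_one_add_inv hL0, Real.exp_neg, Real.exp_log (by norm_num)]
  set W := Real.log (2 * L + 1) + 2 * Real.log 4
  have hkW : k / (3 / 2 * Real.log L) ≤ k / W :=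
    div_le_div_of_nonneg_left k.cast_nonneg (by positivity)
      (log_two_mul_add_one_add_two_mul_log_four_le hL')
  calc (1 + (L : ℝ)⁻¹) ^ L * Real.exp (-4 * (1 - 4⁻¹) * (k / W - 1))
      ≤ Real.exp 1 * Real.exp (3 - 2 * (k / Real.log L)) := by
        gcongr
        rw [div_mul_eq_div_div_swap] at hkW
        linarith
    _ = Real.exp 4 * Real.exp (-2 * (k / Real.log L)) := by
        rw [← Real.exp_add, ← Real.exp_add]
        ring_nf

end Approximation

section SpectralFilters

theorem vecNorm_eq_norm_toLp {L : ℕ} (f : Fin L → ℝ) : vecNorm f = ‖WithLp.toLp 2 f‖ := by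
  simp [vecNorm, EuclideanSpace.norm_eq]

theorem exists_orthonormalBasis_eq_toLp {ι : Type*} [Fintype ι] [DecidableEq ι] {v : ι → ι → ℝ}
    (hv : ∀ i j, ∑ l, v i l * v j l = if i = j then 1 else 0) :
    ∃ b : OrthonormalBasis ι ℝ (EuclideanSpace ℝ ι), ∀ i, b i = WithLp.toLp 2 (v i) := by
  have hv' : Orthonormal ℝ fun i => WithLp.toLp 2 (v i) := orthonormal_iff_ite.2 fun i j => by
    simpa [PiLp.inner_apply, mul_comm] using hv i j
  obtain ⟨b, hb⟩ := Orthonormal.exists_orthonormalBasis_extension_of_card_eq (s := Set.univ)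
    (v := fun i => WithLp.toLp 2 (v i)) (by simp) (hv'.comp _ Subtype.val_injective)
  exact ⟨b, fun i => hb i (Set.mem_univ i)⟩

theorem exists_norm_sum_eigenbasis_sub_impulse_le {L k : ℕ} (hL : 2000 ≤ L) (hk : 0 < k)
    (hkL : k ≤ L) {b : OrthonormalBasis (Fin L) ℝ (EuclideanSpace ℝ (Fin L))} {lam : Fin L → ℝ}
    (hlam : Antitone lam) (hb : ∀ i, (hankel L).toEuclideanLin (b i) = lam i • b i) {α : ℝ}
    (hα : α ∈ Set.Icc (0 : ℝ) 1) :
    ∃ m : Fin k → ℝ, ‖∑ i, m i • b (Fin.castLE hkL i) - WithLp.toLp 2 (impulse L α)‖ ≤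
      2 * Real.exp 2 * Real.exp (-k / Real.log L) := by
  obtain ⟨U, hUk, hU⟩ := exists_submodule_norm_impulse_sub_le_exp hL hk
  obtain ⟨y, hy, hyα⟩ := exists_mem_span_eigenbasis_norm_sub_pow_four_le hlam hb
    (fun t _ => hasDerivAt_toLp_impulse L t) inner_toEuclideanLin_hankel_self two_pos
    (fun t ht => (pow_le_one₀ (norm_nonneg _) (norm_toLp_impulse_le_one ht L)).trans (by norm_num))
    (fun t ht => norm_toLp_impulse_mul_norm_toLp_impulseDeriv_le ht L) hUk hU hkL hα
  obtain ⟨m, rfl⟩ := (Submodule.mem_span_range_iff_exists_fun ℝ).1 hy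
  refine ⟨m, ?_⟩
  rw [norm_sub_rev]
  refine le_of_pow_le_pow_left₀ four_ne_zero (by positivity) (hyα.trans_eq ?_)
  have h4 : Real.exp 4 = Real.exp 2 ^ 2 := by rw [← Real.exp_nat_mul]; norm_num
  have hkL' : Real.exp (-2 * (k / Real.log L)) = Real.exp (-k / Real.log L) ^ 2 := by
    rw [← Real.exp_nat_mul]; ring_nf
  rw [h4, hkL']
  ring

theorem one_le_exp_mul_exp_neg_div_log {N L k : ℕ} (hL : 2 ≤ L) (hkL : k ≤ L) (hLN : L ≤ N) :
    1 ≤ Real.exp (N / Real.log 2) * Real.exp (-k / Real.log L) := by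
  rw [← Real.exp_add, Real.one_le_exp_iff, neg_div, le_add_neg_iff_le]
  gcongr
  · exact_mod_cast hkL.trans hLN
  · exact_mod_cast hL

end SpectralFilters

theorem stmt1 :
    ∃ c : ℝ, 0 < c ∧
      ∀ (L k : ℕ), 2 ≤ L → 1 ≤ k → (hkL : k ≤ L) →
      ∀ α : ℝ, α ∈ Set.Icc (0 : ℝ) 1 →
      ∀ (lam : Fin L → ℝ) (v : Fin L → (Fin L → ℝ)),
        -- eigenvalues sorted in nonincreasing order
        (∀ i j : Fin L, i ≤ j → lam j ≤ lam i) →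
        -- orthonormal family (in particular unit-norm)
        (∀ i j : Fin L, (∑ l, v i l * v j l) = if i = j then 1 else 0) →
        -- eigenvector equation for the Hankel matrix
        (∀ j : Fin L, (hankel L).mulVec (v j) = lam j • v j) →
        -- the spectral filters are the eigenvectors of the k largest eigenvalues
        ∃ m : Fin k → ℝ,
          vecNorm (fun l => (∑ i : Fin k, m i * v (Fin.castLE hkL i) l) - impulse L α l)
            ≤ c * Real.exp (-(k : ℝ) / Real.log L) := by
  refine ⟨2 * Real.exp 2 + Real.exp ((2000 : ℕ) / Real.log 2), by positivity,
    fun L k hL hk hkL α hα lam v hlam hv hvlam => ?_⟩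
  obtain ⟨b, hb⟩ := exists_orthonormalBasis_eq_toLp hv
  have heig (i : Fin L) : (hankel L).toEuclideanLin (b i) = lam i • b i := by
    rw [hb, Matrix.toLpLin_toLp, Matrix.toLin'_apply, hvlam, WithLp.toLp_smul]
  have hsum (m : Fin k → ℝ) :
      vecNorm (fun l => (∑ i : Fin k, m i * v (Fin.castLE hkL i) l) - impulse L α l) =
        ‖∑ i, m i • b (Fin.castLE hkL i) - WithLp.toLp 2 (impulse L α)‖ := by
    rw [vecNorm_eq_norm_toLp]
    congr 1
    ext l
    simp [hb]
  simp only [hsum, add_mul]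
  rcases le_total 2000 L with hL' | hL'
  · obtain ⟨m, hm⟩ := exists_norm_sum_eigenbasis_sub_impulse_le hL' hk hkL hlam heig hα
    exact ⟨m, hm.trans (le_add_of_nonneg_right (by positivity))⟩
  · refine ⟨0, le_add_of_nonneg_of_le (by positivity) ?_⟩
    simpa using (norm_toLp_impulse_le_one hα L).trans (one_le_exp_mul_exp_neg_div_log hL hkL hL')
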